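/- Let θ₁ and θ₂ be independent real Gaussian random variables with θ₁ ~ N(μ₁, σ₁²), θ₂ ~ N(μ₂, σ₂²), and σ₁² + σ₂² > 0. Set s = √(σ₁² + σ₂²) and α = (μ₁ − μ₂)/s. Then E[max(θ₁, θ₂)²] = (μ₁² + σ₁²)·Φ(α) + (μ₂² + σ₂²)·Φ(−α) + (μ₁ + μ₂)·s·φ(α), where Φ and φ are the cumulative distribution function and probability density function of the standard Gaussian N(0,1). Consequently the variance of max(θ₁, θ₂) equals this second moment minus (μ₁Φ(α) + μ₂Φ(−α) + sφ(α))². -/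

import Mathlib

open MeasureTheory ProbabilityTheory Filter

/-- The cumulative distribution function of the standard Gaussian `N(0,1)`. -/
noncomputable def stdGaussianCDF (x : ℝ) : ℝ :=
  ((gaussianReal 0 1) (Set.Iic x)).toReal

/-- The probability density function of the standard Gaussian `N(0,1)`. -/
noncomputable def stdGaussianPDF (x : ℝ) : ℝ :=
  Real.exp (-x ^ 2 / 2) / Real.sqrt (2 * Real.pi)

lemma clark_pdf_eq (x : ℝ) : gaussianPDFReal 0 1 x = stdGaussianPDF x := by
  simp [gaussianPDFReal, stdGaussianPDF]
  ring

lemma clark_int0 : Integrable stdGaussianPDF := by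
  have := integrable_gaussianPDFReal 0 1
  rwa [show gaussianPDFReal 0 1 = stdGaussianPDF from funext clark_pdf_eq] at this

lemma clark_int1 : Integrable (fun x => x * stdGaussianPDF x) := by
  have := (integrable_mul_exp_neg_mul_sq (b := 1/2) (by norm_num)).div_const (Real.sqrt (2 * Real.pi))
  refine this.congr (ae_of_all _ fun x => ?_)
  simp only [stdGaussianPDF]
  rw [show -(1/2) * x^2 = -x^2/2 by ring]; ring

lemma clark_int2 : Integrable (fun x => x ^ 2 * stdGaussianPDF x) := by
  have := (integrable_rpow_mul_exp_neg_mul_sq (b := 1/2) (by norm_num) (s := 2) (by norm_num)).div_const (Real.sqrt (2 * Real.pi))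
  refine this.congr (ae_of_all _ fun x => ?_)
  simp only [stdGaussianPDF]
  rw [show -(1/2) * x^2 = -x^2/2 by ring, Real.rpow_two]; ring

lemma clark_deriv (x : ℝ) : HasDerivAt stdGaussianPDF (-(x * stdGaussianPDF x)) x := by
  have h : HasDerivAt (fun x : ℝ => -x^2/2) (-x) x := by
    have := ((hasDerivAt_pow 2 x).neg).div_const 2
    refine this.congr_deriv ?_
    simp; ring
  have := (h.exp).div_const (Real.sqrt (2 * Real.pi))
  refine this.congr_deriv ?_
  simp only [stdGaussianPDF]; ring

lemma clark_deriv2 (x : ℝ) : HasDerivAt (fun x => x * stdGaussianPDF x)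
    (stdGaussianPDF x - x ^ 2 * stdGaussianPDF x) x := by
  refine ((hasDerivAt_id x).mul (clark_deriv x)).congr_deriv ?_
  simp; ring

lemma clark_I1 (a : ℝ) : ∫ x in Set.Iic a, x * stdGaussianPDF x = - stdGaussianPDF a := by
  have h1 : IntegrableOn (fun x => -(x * stdGaussianPDF x)) (Set.Iic a) := clark_int1.neg.integrableOn
  have := integral_Iic_of_hasDerivAt_of_tendsto' (a := a) (fun x _ => clark_deriv x) h1
    (tendsto_zero_of_hasDerivAt_of_integrableOn_Iic (a := a) (fun x _ => clark_deriv x) h1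
      clark_int0.integrableOn)
  rw [integral_neg] at this
  linarith

lemma clark_cdf (a : ℝ) : ∫ x in Set.Iic a, stdGaussianPDF x = stdGaussianCDF a := by
  rw [stdGaussianCDF, gaussianReal_apply_eq_integral _ one_ne_zero, ENNReal.toReal_ofReal]
  · simp_rw [clark_pdf_eq]
  · exact integral_nonneg fun x => gaussianPDFReal_nonneg _ _ _

lemma clark_I2 (a : ℝ) : ∫ x in Set.Iic a, x ^ 2 * stdGaussianPDF x
    = stdGaussianCDF a - a * stdGaussianPDF a := by
  have h1 : IntegrableOn (fun x => stdGaussianPDF x - x ^ 2 * stdGaussianPDF x) (Set.Iic a) :=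
    (clark_int0.sub clark_int2).integrableOn
  have := integral_Iic_of_hasDerivAt_of_tendsto' (a := a) (fun x _ => clark_deriv2 x) h1
    (tendsto_zero_of_hasDerivAt_of_integrableOn_Iic (a := a) (fun x _ => clark_deriv2 x) h1
      clark_int1.integrableOn)
  rw [integral_sub clark_int0.integrableOn clark_int2.integrableOn, clark_cdf] at this
  linarith

lemma clark_cdf_neg (a : ℝ) : stdGaussianCDF (-a) = 1 - stdGaussianCDF a := by
  have h1 : ∫ x, stdGaussianPDF x = 1 := by
    simp_rw [← clark_pdf_eq]; exact integral_gaussianPDFReal_eq_one 0 one_ne_zero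
  have h2 := intervalIntegral.integral_Iic_add_Ioi (b := a) (clark_int0.integrableOn) (clark_int0.integrableOn)
  have h3 := integral_comp_neg_Iic (-a) stdGaussianPDF
  have h4 : ∀ x, stdGaussianPDF (-x) = stdGaussianPDF x := by intro x; simp [stdGaussianPDF]
  simp_rw [h4, neg_neg] at h3
  rw [← clark_cdf, ← clark_cdf, h3, ← h1, ← h2]; ring

lemma clark_M1 (a : ℝ) : ∫ x, max (a - x) 0 ∂(gaussianReal 0 1)
    = a * stdGaussianCDF a + stdGaussianPDF a := by
  rw [integral_gaussianReal_eq_integral_smul one_ne_zero]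
  have : ∀ x, gaussianPDFReal 0 1 x • max (a - x) 0 =
      (Set.Iic a).indicator (fun x => a * stdGaussianPDF x - x * stdGaussianPDF x) x := by
    intro x
    rw [clark_pdf_eq, smul_eq_mul]
    by_cases h : x ≤ a
    · rw [Set.indicator_of_mem (by exact h), max_eq_left (by linarith)]; ring
    · rw [Set.indicator_of_notMem (by exact h), max_eq_right (by linarith)]; ring
  simp_rw [this]
  rw [integral_indicator measurableSet_Iic, integral_sub (clark_int0.const_mul a).integrableOn
    clark_int1.integrableOn, integral_const_mul, clark_cdf, clark_I1]
  ring

lemma clark_M2 (a : ℝ) : ∫ x, (max (a - x) 0) ^ 2 ∂(gaussianReal 0 1)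
    = (a ^ 2 + 1) * stdGaussianCDF a + a * stdGaussianPDF a := by
  rw [integral_gaussianReal_eq_integral_smul one_ne_zero]
  have : ∀ x, gaussianPDFReal 0 1 x • (max (a - x) 0) ^ 2 =
      (Set.Iic a).indicator (fun x => a ^ 2 * stdGaussianPDF x - 2 * a * (x * stdGaussianPDF x)
        + x ^ 2 * stdGaussianPDF x) x := by
    intro x
    rw [clark_pdf_eq, smul_eq_mul]
    by_cases h : x ≤ a
    · rw [Set.indicator_of_mem (by exact h), max_eq_left (by linarith)]; ring
    · rw [Set.indicator_of_notMem (by exact h), max_eq_right (by linarith)]; ring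
  simp_rw [this]
  have hi : IntegrableOn (fun x => a ^ 2 * stdGaussianPDF x - 2 * a * (x * stdGaussianPDF x))
      (Set.Iic a) :=
    ((clark_int0.const_mul (a ^ 2)).sub (clark_int1.const_mul (2 * a))).integrableOn
  rw [integral_indicator measurableSet_Iic, integral_add hi
    clark_int2.integrableOn, integral_sub (clark_int0.const_mul (a ^ 2)).integrableOn
    (clark_int1.const_mul (2 * a)).integrableOn, integral_const_mul, integral_const_mul,
    clark_cdf, clark_I1, clark_I2]
  ring

lemma clark_map (d : ℝ) (v : NNReal) (s : ℝ) (hs : s ^ 2 = v) (hs0 : 0 < s) :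
    gaussianReal d v = (gaussianReal 0 1).map (fun x => s * (d / s - x)) := by
  have h : (fun x : ℝ => s * (d / s - x)) = (fun x => s * x) ∘ (fun x => d / s - x) := rfl
  rw [h, ← Measure.map_map (by fun_prop) (by fun_prop), gaussianReal_map_const_sub,
    gaussianReal_map_const_mul]
  congr 1
  · field_simp; ring
  · ext; simp [hs]

lemma clark_D1 (d : ℝ) (v : NNReal) (s : ℝ) (hs : s ^ 2 = v) (hs0 : 0 < s) :
    ∫ x, max x 0 ∂(gaussianReal d v) = d * stdGaussianCDF (d / s) + s * stdGaussianPDF (d / s) := by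
  rw [clark_map d v s hs hs0, integral_map (by fun_prop) (by fun_prop)]
  have : ∀ x : ℝ, max (s * (d / s - x)) 0 = s * max (d / s - x) 0 := by
    intro x; rw [mul_max_of_nonneg _ _ hs0.le, mul_zero]
  simp_rw [this]
  rw [integral_const_mul, clark_M1]
  field_simp

lemma clark_D2 (d : ℝ) (v : NNReal) (s : ℝ) (hs : s ^ 2 = v) (hs0 : 0 < s) :
    ∫ x, (max x 0) ^ 2 ∂(gaussianReal d v)
      = (d ^ 2 + s ^ 2) * stdGaussianCDF (d / s) + d * s * stdGaussianPDF (d / s) := by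
  rw [clark_map d v s hs hs0, integral_map (by fun_prop) (by fun_prop)]
  have : ∀ x : ℝ, (max (s * (d / s - x)) 0) ^ 2 = s ^ 2 * (max (d / s - x) 0) ^ 2 := by
    intro x; rw [← mul_pow, mul_max_of_nonneg _ _ hs0.le, mul_zero]
  simp_rw [this]
  rw [integral_const_mul, clark_M2]
  field_simp

/-- Clark's formula for the second moment of the maximum of two independent Gaussians:
`E[max(θ₁, θ₂)²] = (μ₁² + σ₁²)·Φ(α) + (μ₂² + σ₂²)·Φ(−α) + (μ₁ + μ₂)·s·φ(α)` with
`s = √(σ₁² + σ₂²)` and `α = (μ₁ − μ₂)/s`; consequently the variance of `max(θ₁, θ₂)`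
is this second moment minus the square of the Clark mean. -/
theorem stmt8
    {Ω : Type*} [MeasurableSpace Ω] (P : Measure Ω) [IsProbabilityMeasure P]
    (θ₁ θ₂ : Ω → ℝ) (hθ₁ : Measurable θ₁) (hθ₂ : Measurable θ₂)
    (μ₁ μ₂ : ℝ) (v₁ v₂ : NNReal)
    (hlaw₁ : Measure.map θ₁ P = gaussianReal μ₁ v₁)
    (hlaw₂ : Measure.map θ₂ P = gaussianReal μ₂ v₂)
    (hindep : IndepFun θ₁ θ₂ P)
    (hv : 0 < (v₁ : ℝ) + (v₂ : ℝ)) :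
    (∫ ω, (max (θ₁ ω) (θ₂ ω)) ^ 2 ∂P
      = (μ₁ ^ 2 + (v₁ : ℝ)) * stdGaussianCDF ((μ₁ - μ₂) / Real.sqrt ((v₁ : ℝ) + (v₂ : ℝ)))
        + (μ₂ ^ 2 + (v₂ : ℝ))
          * stdGaussianCDF (-((μ₁ - μ₂) / Real.sqrt ((v₁ : ℝ) + (v₂ : ℝ))))
        + (μ₁ + μ₂) * Real.sqrt ((v₁ : ℝ) + (v₂ : ℝ))
          * stdGaussianPDF ((μ₁ - μ₂) / Real.sqrt ((v₁ : ℝ) + (v₂ : ℝ)))) ∧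
    (variance (fun ω => max (θ₁ ω) (θ₂ ω)) P
      = (μ₁ ^ 2 + (v₁ : ℝ)) * stdGaussianCDF ((μ₁ - μ₂) / Real.sqrt ((v₁ : ℝ) + (v₂ : ℝ)))
        + (μ₂ ^ 2 + (v₂ : ℝ))
          * stdGaussianCDF (-((μ₁ - μ₂) / Real.sqrt ((v₁ : ℝ) + (v₂ : ℝ))))
        + (μ₁ + μ₂) * Real.sqrt ((v₁ : ℝ) + (v₂ : ℝ))
          * stdGaussianPDF ((μ₁ - μ₂) / Real.sqrt ((v₁ : ℝ) + (v₂ : ℝ)))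
        - (μ₁ * stdGaussianCDF ((μ₁ - μ₂) / Real.sqrt ((v₁ : ℝ) + (v₂ : ℝ)))
            + μ₂ * stdGaussianCDF (-((μ₁ - μ₂) / Real.sqrt ((v₁ : ℝ) + (v₂ : ℝ))))
            + Real.sqrt ((v₁ : ℝ) + (v₂ : ℝ))
              * stdGaussianPDF ((μ₁ - μ₂) / Real.sqrt ((v₁ : ℝ) + (v₂ : ℝ)))) ^ 2) := by
  set s := Real.sqrt ((v₁ : ℝ) + (v₂ : ℝ)) with hsdef
  have hs0 : 0 < s := Real.sqrt_pos.mpr hv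
  have hs2 : s ^ 2 = (v₁ : ℝ) + (v₂ : ℝ) := Real.sq_sqrt hv.le
  have hG₁ : HasGaussianLaw θ₁ P := ⟨by rw [hlaw₁]; infer_instance⟩
  have hG₂ : HasGaussianLaw θ₂ P := ⟨by rw [hlaw₂]; infer_instance⟩
  have hm₁ := hG₁.memLp_two
  have hm₂ := hG₂.memLp_two
  have hE₁ : ∫ ω, θ₁ ω ∂P = μ₁ := by
    have := integral_map (μ := P) hθ₁.aemeasurable (f := fun x : ℝ => x) (by fun_prop)
    rw [← this, hlaw₁, integral_id_gaussianReal]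
  have hE₂ : ∫ ω, θ₂ ω ∂P = μ₂ := by
    have := integral_map (μ := P) hθ₂.aemeasurable (f := fun x : ℝ => x) (by fun_prop)
    rw [← this, hlaw₂, integral_id_gaussianReal]
  have hV₁ : Var[θ₁; P] = v₁ := by
    rw [← variance_id_map hθ₁.aemeasurable, hlaw₁, variance_id_gaussianReal]
  have hV₂ : Var[θ₂; P] = v₂ := by
    rw [← variance_id_map hθ₂.aemeasurable, hlaw₂, variance_id_gaussianReal]
  have hS₂ : ∫ ω, (θ₂ ω) ^ 2 ∂P = μ₂ ^ 2 + v₂ := by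
    have := variance_eq_sub hm₂
    rw [hV₂, hE₂] at this
    simp only [Pi.pow_apply] at this
    linarith
  have hc0 : cov[θ₁, θ₂; P] = 0 := hindep.covariance_eq_zero hm₁ hm₂
  let D : Ω → ℝ := fun ω => θ₁ ω - θ₂ ω
  let W : Ω → ℝ := fun ω => v₂ * θ₁ ω + v₁ * θ₂ ω
  have hDm : Measurable D := hθ₁.sub hθ₂
  have hWm : Measurable W := (hθ₁.const_mul _).add (hθ₂.const_mul _)
  have hDlaw : P.map D = gaussianReal (μ₁ - μ₂) (v₁ + v₂) := by
    have hneg : P.map (fun ω => - θ₂ ω) = gaussianReal (-μ₂) v₂ := by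
      rw [← gaussianReal_map_neg, ← hlaw₂, Measure.map_map (by fun_prop) hθ₂]; rfl
    have := gaussianReal_add_gaussianReal_of_indepFun
      (hindep.comp measurable_id measurable_neg) hlaw₁ hneg
    rw [sub_eq_add_neg, ← this]
    congr 1
  have hDL : MemLp D 2 P := hm₁.sub hm₂
  have hDL' : MemLp (θ₁ - θ₂) 2 P := hDL
  have hWL : MemLp W 2 P := (hm₁.const_mul _).add (hm₂.const_mul _)
  have hWD : IndepFun W D P := by
    apply HasGaussianLaw.indepFun_of_covariance_eq_zero
    · have hj := hindep.hasGaussianLaw hG₁ hG₂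
      have := hj.map_fun (((v₂ : ℝ) • ContinuousLinearMap.fst ℝ ℝ ℝ
        + (v₁ : ℝ) • ContinuousLinearMap.snd ℝ ℝ ℝ).prod
        (ContinuousLinearMap.fst ℝ ℝ ℝ - ContinuousLinearMap.snd ℝ ℝ ℝ))
      simpa [W, D] using this
    · have e : cov[W, D; P] = cov[(fun ω => (v₂ : ℝ) * θ₁ ω) + (fun ω => (v₁ : ℝ) * θ₂ ω),
          θ₁ - θ₂; P] := rfl
      rw [e, covariance_add_left (hm₁.const_mul _) (hm₂.const_mul _) hDL',
        covariance_const_mul_left, covariance_const_mul_left, covariance_sub_right hm₁ hm₁ hm₂,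
        covariance_sub_right hm₂ hm₁ hm₂, covariance_comm θ₂ θ₁, hc0,
        covariance_self hθ₁.aemeasurable, covariance_self hθ₂.aemeasurable, hV₁, hV₂]
      ring
  let R : Ω → ℝ := fun ω => max (D ω) 0
  have hRm : Measurable R := hDm.max measurable_const
  have hRL : MemLp R 2 P := hDL.sup (memLp_const 0)
  have hv' : s ^ 2 = ((v₁ + v₂ : NNReal) : ℝ) := by rw [hs2]; simp
  have hR1 : ∫ ω, R ω ∂P = (μ₁ - μ₂) * stdGaussianCDF ((μ₁ - μ₂) / s)
      + s * stdGaussianPDF ((μ₁ - μ₂) / s) := by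
    have := integral_map (μ := P) hDm.aemeasurable (f := fun x : ℝ => max x 0) (by fun_prop)
    rw [hDlaw, clark_D1 _ _ s hv' hs0] at this
    exact this.symm
  have hR2 : ∫ ω, (R ω) ^ 2 ∂P = ((μ₁ - μ₂) ^ 2 + s ^ 2) * stdGaussianCDF ((μ₁ - μ₂) / s)
      + (μ₁ - μ₂) * s * stdGaussianPDF ((μ₁ - μ₂) / s) := by
    have := integral_map (μ := P) hDm.aemeasurable (f := fun x : ℝ => (max x 0) ^ 2) (by fun_prop)
    rw [hDlaw, clark_D2 _ _ s hv' hs0] at this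
    exact this.symm
  have hWE : ∫ ω, W ω ∂P = v₂ * μ₁ + v₁ * μ₂ := by
    simp only [W]
    rw [integral_add (hG₁.integrable.const_mul _) (hG₂.integrable.const_mul _),
      integral_const_mul, integral_const_mul, hE₁, hE₂]
  have hWR : ∫ ω, W ω * R ω ∂P = (∫ ω, W ω ∂P) * ∫ ω, R ω ∂P :=
    IndepFun.integral_fun_mul_eq_mul_integral
      (hWD.comp measurable_id (measurable_id.max measurable_const))
      hWm.aestronglyMeasurable hRm.aestronglyMeasurable
  have hWRi : Integrable (fun ω => W ω * R ω) P := hWL.integrable_mul hRL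
  have hTRi : Integrable (fun ω => θ₂ ω * R ω) P := hm₂.integrable_mul hRL
  have hTR : s ^ 2 * ∫ ω, θ₂ ω * R ω ∂P = ∫ ω, W ω * R ω ∂P - v₂ * ∫ ω, (R ω) ^ 2 ∂P := by
    rw [← integral_const_mul, ← integral_const_mul,
      ← integral_sub hWRi (hRL.integrable_sq.const_mul _)]
    congr 1
    ext ω
    have h : (R ω) ^ 2 = D ω * R ω := by
      rcases le_total (D ω) 0 with h | h
      · simp [R, h]
      · simp [R, h]; ring
    rw [h, hs2]; simp only [W, D]; ring
  have hmax : ∀ ω, max (θ₁ ω) (θ₂ ω) = θ₂ ω + R ω := by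
    intro ω
    rcases le_total (θ₁ ω) (θ₂ ω) with h | h <;> simp [R, D, h]
  have hM1 : ∫ ω, max (θ₁ ω) (θ₂ ω) ∂P = μ₂ + ∫ ω, R ω ∂P := by
    simp_rw [hmax]
    rw [integral_add hG₂.integrable (hRL.integrable one_le_two), hE₂]
  have hM2 : ∫ ω, (max (θ₁ ω) (θ₂ ω)) ^ 2 ∂P
      = (μ₂ ^ 2 + v₂) + 2 * ∫ ω, θ₂ ω * R ω ∂P + ∫ ω, (R ω) ^ 2 ∂P := by
    have hi : Integrable (fun ω => θ₂ ω ^ 2 + 2 * (θ₂ ω * R ω)) P :=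
      hm₂.integrable_sq.add (hTRi.const_mul _)
    rw [← hS₂, ← integral_const_mul, ← integral_add hm₂.integrable_sq (hTRi.const_mul _),
      ← integral_add hi hRL.integrable_sq]
    congr 1
    ext ω
    rw [hmax]; ring
  have hsecond : ∫ ω, (max (θ₁ ω) (θ₂ ω)) ^ 2 ∂P
      = (μ₁ ^ 2 + (v₁ : ℝ)) * stdGaussianCDF ((μ₁ - μ₂) / s)
        + (μ₂ ^ 2 + (v₂ : ℝ)) * stdGaussianCDF (-((μ₁ - μ₂) / s))
        + (μ₁ + μ₂) * s * stdGaussianPDF ((μ₁ - μ₂) / s) := by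
    rw [hWR, hWE, hR1, hR2] at hTR
    rw [hM2, hR2, clark_cdf_neg]
    have hv1 : (v₁ : ℝ) = s ^ 2 - v₂ := by linarith
    rw [hv1] at hTR ⊢
    have hs2' : s ^ 2 ≠ 0 := by positivity
    apply mul_left_cancel₀ hs2'
    linear_combination 2 * hTR
  refine ⟨hsecond, ?_⟩
  have hML : MemLp (fun ω => max (θ₁ ω) (θ₂ ω)) 2 P := hm₁.sup hm₂
  rw [variance_eq_sub hML]
  simp only [Pi.pow_apply]
  rw [hsecond, hM1, hR1, clark_cdf_neg]
  ring
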